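/- Fix u₁, u₂ > 0 and a₁*, a₂* ≥ 0. For δ near 0, set a₁ = a₁* + δ/u₁ and a₂ = a₂* - δ/u₂. Let G₁ ~ Gamma(u₁,1), G₂ ~ Gamma(u₂,1), Z₁, Z₂ ~ Exp(1) all independent. Then for all x, ∂/∂δ P(a₁G₁ + a₂G₂ ≤ x) = (a₁ - a₂) ∂²/∂x² P(a₁(G₁+Z₁) + a₂(G₂+Z₂) ≤ x). -/

import Mathlib

open MeasureTheory ProbabilityTheory

section GammaCombination

open Real Set Filter Topology
open scoped ENNReal

/-- The function `c ↦ c ^ (-q) * exp (-y / c)` on the positive half-line, extended by zero. -/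
noncomputable def inverseGammaKernel (q y c : ℝ) : ℝ :=
  if 0 < c then c ^ (-q) * exp (-(y / c)) else 0

namespace inverseGammaKernel

variable {q y c : ℝ}

lemma of_pos (hc : 0 < c) : inverseGammaKernel q y c = c ^ (-q) * exp (-(y / c)) := if_pos hc

lemma of_nonpos (hc : c ≤ 0) : inverseGammaKernel q y c = 0 := if_neg hc.not_gt

lemma nonneg : 0 ≤ inverseGammaKernel q y c := by
  unfold inverseGammaKernel
  split_ifs <;> positivity

@[fun_prop]
lemma measurable : Measurable (inverseGammaKernel q y) :=
  Measurable.ite measurableSet_Ioi (by fun_prop) (by fun_prop)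

lemma le_rpow (hq : 0 < q) (hy : 0 < y) : inverseGammaKernel q y c ≤ (q / y) ^ q := by
  unfold inverseGammaKernel
  split_ifs with hc
  · have h : y / c / q ≤ exp (y / c / q) := by linarith [add_one_le_exp (y / c / q)]
    have h2 : (y / c / q) ^ q ≤ exp (y / c) := by
      calc _ ≤ exp (y / c / q) ^ q := by gcongr
        _ = _ := by rw [← exp_mul]; congr 1; field_simp
    have h3 : c ^ (-q) = (q / y) ^ q * (y / c / q) ^ q := by
      rw [← mul_rpow (by positivity) (by positivity), rpow_neg hc.le, ← inv_rpow hc.le]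
      congr 1; field_simp
    rw [h3, mul_assoc, exp_neg]
    refine mul_le_of_le_one_right (by positivity) ?_
    rw [← div_eq_mul_inv]
    exact (div_le_one (exp_pos _)).2 h2
  · positivity

lemma le_of_le {y₀ : ℝ} (hq : 0 < q) (hy₀ : 0 < y₀) (hy : y₀ ≤ y) :
    inverseGammaKernel q y c ≤ (q / y₀) ^ q := by
  have : 0 < y := hy₀.trans_le hy
  exact (le_rpow hq this).trans (by gcongr)

lemma hasDerivAt_left : HasDerivAt (fun y => inverseGammaKernel q y c)
    (-inverseGammaKernel (q + 1) y c) y := by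
  by_cases hc : 0 < c
  · simp only [of_pos hc]
    convert! (((hasDerivAt_id y).div_const c).neg.exp).const_mul (c ^ (-q)) using 1
    rw [show -(q + 1) = -q - 1 by ring, rpow_sub_one hc.ne']
    simp only [id, Pi.neg_apply]
    field_simp
  · simp only [of_nonpos (not_lt.1 hc), neg_zero]
    exact hasDerivAt_const _ _

lemma tendsto_zero (hy : 0 < y) : Tendsto (inverseGammaKernel q y) (𝓝 0) (𝓝 0) := by
  refine Tendsto.mono_left ?_ (nhdsLE_sup_nhdsGT (0 : ℝ)).ge
  refine tendsto_sup.2 ⟨?_, ?_⟩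
  · refine tendsto_const_nhds.congr' ?_
    filter_upwards [self_mem_nhdsWithin] with c hc
    rw [of_nonpos hc]
  · refine ((tendsto_rpow_mul_exp_neg_mul_atTop_nhds_zero q y hy).comp
      tendsto_inv_nhdsGT_zero).congr' ?_
    filter_upwards [self_mem_nhdsWithin] with c hc
    have hc' : 0 < c := hc
    rw [of_pos hc', Function.comp, rpow_neg hc'.le, inv_rpow hc'.le, neg_mul, div_eq_mul_inv]

lemma hasDerivAt_right (hy : 0 < y) : HasDerivAt (inverseGammaKernel q y)
    (-q * inverseGammaKernel (q + 1) y c + y * inverseGammaKernel (q + 2) y c) c := by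
  have key : ∀ c ≠ 0, HasDerivAt (inverseGammaKernel q y)
      (-q * inverseGammaKernel (q + 1) y c + y * inverseGammaKernel (q + 2) y c) c := by
    intro c hc0
    rcases hc0.lt_or_gt with hc | hc
    · rw [of_nonpos hc.le, of_nonpos hc.le]
      simp only [mul_zero, add_zero]
      refine (hasDerivAt_const c (0 : ℝ)).congr_of_eventuallyEq ?_
      filter_upwards [Iio_mem_nhds hc] with d hd
      exact of_nonpos (le_of_lt hd)
    · have : inverseGammaKernel q y =ᶠ[𝓝 c] fun c => c ^ (-q) * exp (-(y / c)) := by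
        filter_upwards [Ioi_mem_nhds hc] with d hd
        exact of_pos hd
      refine HasDerivAt.congr_of_eventuallyEq ?_ this
      convert! (hasDerivAt_rpow_const (p := -q) (Or.inl hc0)).mul
        (((hasDerivAt_const c y).div (hasDerivAt_id c) hc0).neg.exp) using 1
      rw [of_pos hc, of_pos hc, show -(q + 1) = -q - 1 by ring,
        show -(q + 2) = -q - (2 : ℕ) by push_cast; ring, rpow_sub_one hc0, rpow_sub_natCast hc0]
      simp only [id, Pi.neg_apply, Pi.div_apply]
      field_simp
      ring
  rcases eq_or_ne c 0 with rfl | hc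
  · refine hasDerivAt_of_hasDerivAt_of_ne (x := 0)
      (g := fun c => -q * inverseGammaKernel (q + 1) y c + y * inverseGammaKernel (q + 2) y c)
      key ?_ ?_
    · rw [ContinuousAt, of_nonpos le_rfl]
      exact tendsto_zero hy
    · rw [ContinuousAt, of_nonpos le_rfl, of_nonpos le_rfl]
      exact ((tendsto_zero hy).const_mul _).add ((tendsto_zero hy).const_mul _)
  · exact key c hc

@[fun_prop]
lemma continuous (hy : 0 < y) : Continuous (inverseGammaKernel q y) :=
  continuous_iff_continuousAt.2 fun _ => (hasDerivAt_right hy).continuousAt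

end inverseGammaKernel

lemma hasDerivAt_cdf_gammaMeasure {u y : ℝ} (hu : 0 < u) (hy : 0 < y) :
    HasDerivAt (cdf (gammaMeasure u 1)) (gammaPDFReal u 1 y) y := by
  have hint : Integrable (gammaPDFReal u 1) := by
    refine ⟨(measurable_gammaPDFReal u 1).aestronglyMeasurable, ?_⟩
    rw [hasFiniteIntegral_iff_ofReal (ae_of_all _ (gammaPDFReal_nonneg hu one_pos))]
    exact (lintegral_gammaPDF_eq_one hu one_pos).trans_lt ENNReal.one_lt_top
  have hcont : ContinuousAt (gammaPDFReal u 1) y := by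
    have : gammaPDFReal u 1 =ᶠ[𝓝 y] fun x => 1 ^ u / Gamma u * x ^ (u - 1) * exp (-(1 * x)) := by
      filter_upwards [Ioi_mem_nhds hy] with d hd
      exact if_pos (le_of_lt hd)
    refine ContinuousAt.congr ?_ this.symm
    exact (continuousAt_const.mul (continuousAt_rpow_const _ _ (Or.inl hy.ne'))).mul
      (by fun_prop)
  have h := intervalIntegral.integral_hasDerivAt_right (a := 0)
    hint.intervalIntegrable
    (measurable_gammaPDFReal u 1).stronglyMeasurable.stronglyMeasurableAtFilter hcont
  refine (h.const_add (∫ x in Iic 0, gammaPDFReal u 1 x)).congr_of_eventuallyEq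
    (Eventually.of_forall fun x => ?_)
  simp only [cdf_gammaMeasure_eq_integral hu one_pos]
  rw [← intervalIntegral.integral_Iic_sub_Iic hint.integrableOn hint.integrableOn]
  ring

/-- The distribution function at `y` of `c` times a `Gamma(u, 1)` variable. -/
noncomputable def scaledGammaCDF (u y c : ℝ) : ℝ := (gammaMeasure u 1).real {r | r * c ≤ y}

section scaledGammaCDF

variable {u y c : ℝ}

lemma scaledGammaCDF_of_pos (hu : 0 < u) (hc : 0 < c) :
    scaledGammaCDF u y c = cdf (gammaMeasure u 1) (y / c) := by
  have := isProbabilityMeasure_gammaMeasure hu one_pos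
  rw [cdf_eq_real, scaledGammaCDF]
  congr 1
  ext r
  simp [le_div_iff₀ hc]

lemma ae_gammaMeasure_pos : ∀ᵐ r ∂(gammaMeasure u 1), 0 < r := by
  have h : gammaMeasure u 1 {r | ¬ 0 < r} = 0 := by
    rw [show {r : ℝ | ¬ 0 < r} = Iic 0 by ext; simp, gammaMeasure,
      withDensity_apply _ measurableSet_Iic, ← setLIntegral_congr Iio_ae_eq_Iic]
    exact lintegral_gammaPDF_of_nonpos le_rfl
  exact h

lemma scaledGammaCDF_of_nonpos (hu : 0 < u) (hy : 0 < y) (hc : c ≤ 0) :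
    scaledGammaCDF u y c = 1 := by
  have := isProbabilityMeasure_gammaMeasure hu one_pos
  refine Eq.trans (measureReal_congr ?_) (probReal_univ (μ := gammaMeasure u 1))
  filter_upwards [ae_gammaMeasure_pos] with r hr
  exact propext ⟨fun _ => trivial, fun _ => show r * c ≤ y by nlinarith⟩

lemma hasDerivAt_scaledGammaCDF_left (hu : 0 < u) (hy : 0 < y) :
    HasDerivAt (fun y => scaledGammaCDF u y c)
      (y ^ (u - 1) * inverseGammaKernel u y c / Gamma u) y := by
  by_cases hc : 0 < c
  · simp only [scaledGammaCDF_of_pos hu hc]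
    convert! (hasDerivAt_cdf_gammaMeasure hu (div_pos hy hc)).comp y
      ((hasDerivAt_id y).div_const c) using 1
    rw [gammaPDFReal, if_pos (by positivity), inverseGammaKernel.of_pos hc, one_rpow, one_mul,
      div_rpow hy.le hc.le, rpow_sub_one hc.ne', rpow_neg hc.le]
    field_simp
  · rw [inverseGammaKernel.of_nonpos (not_lt.1 hc), mul_zero, zero_div]
    refine (hasDerivAt_const y (1 : ℝ)).congr_of_eventuallyEq ?_
    filter_upwards [Ioi_mem_nhds hy] with z hz
    exact scaledGammaCDF_of_nonpos hu hz (not_lt.1 hc)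

lemma hasDerivAt_scaledGammaCDF_right (hu : 0 < u) (hy : 0 < y) :
    HasDerivAt (scaledGammaCDF u y)
      (-(y ^ u * inverseGammaKernel (u + 1) y c / Gamma u)) c := by
  have key : ∀ c ≠ 0, HasDerivAt (scaledGammaCDF u y)
      (-(y ^ u * inverseGammaKernel (u + 1) y c / Gamma u)) c := by
    intro c hc0
    rcases hc0.lt_or_gt with hc | hc
    · rw [inverseGammaKernel.of_nonpos hc.le, mul_zero, zero_div, neg_zero]
      refine (hasDerivAt_const c (1 : ℝ)).congr_of_eventuallyEq ?_
      filter_upwards [Iio_mem_nhds hc] with d hd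
      exact scaledGammaCDF_of_nonpos hu hy (le_of_lt hd)
    · have : scaledGammaCDF u y =ᶠ[𝓝 c] fun c => cdf (gammaMeasure u 1) (y / c) := by
        filter_upwards [Ioi_mem_nhds hc] with d hd
        exact scaledGammaCDF_of_pos hu hd
      refine HasDerivAt.congr_of_eventuallyEq ?_ this
      convert! (hasDerivAt_cdf_gammaMeasure hu (div_pos hy hc)).comp c
        ((hasDerivAt_const c y).div (hasDerivAt_id c) hc0) using 1
      rw [gammaPDFReal, if_pos (by positivity), inverseGammaKernel.of_pos hc, one_rpow, one_mul,
        div_rpow hy.le hc.le, rpow_sub_one hc.ne', rpow_sub_one hy.ne',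
        show -(u + 1) = -u - 1 by ring, rpow_sub_one hc.ne', rpow_neg hc.le]
      field_simp
      ring
  rcases eq_or_ne c 0 with rfl | hc
  · refine hasDerivAt_of_hasDerivAt_of_ne (x := 0)
      (g := fun c => -(y ^ u * inverseGammaKernel (u + 1) y c / Gamma u)) key ?_ ?_
    · rw [ContinuousAt, scaledGammaCDF_of_nonpos hu hy le_rfl, ← nhdsLE_sup_nhdsGT, tendsto_sup]
      constructor
      · refine tendsto_const_nhds.congr' ?_
        filter_upwards [self_mem_nhdsWithin] with c hc
        rw [scaledGammaCDF_of_nonpos hu hy hc]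
      · refine ((tendsto_cdf_atTop (gammaMeasure u 1)).comp
          (tendsto_inv_nhdsGT_zero.const_mul_atTop hy)).congr' ?_
        filter_upwards [self_mem_nhdsWithin] with c hc
        rw [scaledGammaCDF_of_pos hu hc, Function.comp, div_eq_mul_inv]
    · have := inverseGammaKernel.continuous (q := u + 1) hy
      fun_prop
  · exact key c hc

end scaledGammaCDF

lemma lintegral_eq_mul_lintegral_comp_mul_left {r : ℝ} (hr : 0 < r) {g : ℝ → ℝ≥0∞}
    (hg : Measurable g) : ∫⁻ s, g s = ENNReal.ofReal r * ∫⁻ b, g (r * b) := by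
  conv_lhs => rw [← Real.smul_map_volume_mul_left hr.ne']
  rw [lintegral_smul_measure, lintegral_map hg (by fun_prop), abs_of_pos hr, smul_eq_mul]

lemma gammaPDF_mul_gammaPDF_eq {u₁ u₂ r b : ℝ} (hu₁ : 0 < u₁) (hu₂ : 0 < u₂) (hr : 0 < r)
    (hb₀ : b ≠ 0) (hb₁ : b ≠ 1) :
    ENNReal.ofReal r * (gammaPDF u₁ 1 (r * b) * gammaPDF u₂ 1 (r - r * b)) =
      gammaPDF (u₁ + u₂) 1 r * betaPDF u₁ u₂ b := by
  rw [show r - r * b = r * (1 - b) by ring]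
  rcases hb₀.lt_or_gt with hb | hb
  · rw [gammaPDF_of_neg (x := r * b) (by nlinarith), betaPDF_eq_zero_of_nonpos hb.le]
    simp
  rcases hb₁.lt_or_gt with hb' | hb'
  · have h1b : 0 < 1 - b := by linarith
    have h₁ := Gamma_pos_of_pos hu₁
    have h₂ := Gamma_pos_of_pos hu₂
    have h₃ := Gamma_pos_of_pos (add_pos hu₁ hu₂)
    rw [gammaPDF_of_nonneg (by positivity), gammaPDF_of_nonneg (by positivity),
      gammaPDF_of_nonneg hr.le, betaPDF_of_pos_lt_one hb hb', ← ENNReal.ofReal_mul (by positivity),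
      ← ENNReal.ofReal_mul hr.le, ← ENNReal.ofReal_mul (by positivity)]
    congr 1
    rw [mul_rpow hr.le hb.le, mul_rpow hr.le h1b.le, beta,
      show u₁ + u₂ - 1 = (u₁ - 1) + (u₂ - 1) + 1 by ring, rpow_add hr, rpow_add hr, rpow_one,
      show exp (-(1 * r)) = exp (-(1 * (r * b))) * exp (-(1 * (r * (1 - b)))) by
        rw [← exp_add]; congr 1; ring]
    simp only [one_rpow]
    field_simp
  · rw [gammaPDF_of_neg (x := r * (1 - b)) (by nlinarith), betaPDF_eq_zero_of_one_le hb'.le]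
    simp

@[fun_prop]
lemma measurable_gammaPDF (a r : ℝ) : Measurable (gammaPDF a r) :=
  (measurable_gammaPDFReal a r).ennreal_ofReal

@[fun_prop]
lemma measurable_betaPDF (α β : ℝ) : Measurable (betaPDF α β) :=
  (measurable_betaPDFReal α β).ennreal_ofReal

/-- Two independent gamma variables are `R * B` and `R * (1 - B)`, where `R` is a gamma variable
and `B` an independent beta variable. -/
lemma gammaMeasure_prod_gammaMeasure {u₁ u₂ : ℝ} (hu₁ : 0 < u₁) (hu₂ : 0 < u₂) :
    (gammaMeasure u₁ 1).prod (gammaMeasure u₂ 1) =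
      ((gammaMeasure (u₁ + u₂) 1).prod (betaMeasure u₁ u₂)).map
        fun p : ℝ × ℝ => (p.1 * p.2, p.1 * (1 - p.2)) := by
  have := isProbabilityMeasure_gammaMeasure hu₁ one_pos
  have := isProbabilityMeasure_gammaMeasure hu₂ one_pos
  have := isProbabilityMeasure_gammaMeasure (add_pos hu₁ hu₂) one_pos
  have := isProbabilityMeasureBeta hu₁ hu₂
  unfold gammaMeasure betaMeasure at *
  refine Measure.ext_of_lintegral _ fun f hf => ?_
  rw [lintegral_map hf (by fun_prop), prod_withDensity (by fun_prop) (by fun_prop),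
    prod_withDensity (by fun_prop) (by fun_prop),
    lintegral_withDensity_eq_lintegral_mul _ (by fun_prop) hf,
    lintegral_withDensity_eq_lintegral_mul _ (by fun_prop) (by fun_prop),
    lintegral_prod _ (by fun_prop), lintegral_prod _ (by fun_prop)]
  simp only [Pi.mul_apply]
  calc
    _ = ∫⁻ s, ∫⁻ r, gammaPDF u₁ 1 s * gammaPDF u₂ 1 (r - s) * f (s, r - s) :=
      lintegral_congr fun s => (lintegral_sub_right_eq_self
        (fun t => gammaPDF u₁ 1 s * gammaPDF u₂ 1 t * f (s, t)) s).symm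
    _ = ∫⁻ r, ∫⁻ s, gammaPDF u₁ 1 s * gammaPDF u₂ 1 (r - s) * f (s, r - s) :=
      lintegral_lintegral_swap (by fun_prop)
    _ = _ := by
      refine lintegral_congr_ae ?_
      filter_upwards [Measure.ae_ne volume (0 : ℝ)] with r hr0
      rcases hr0.lt_or_gt with hr | hr
      · rw [gammaPDF_of_neg hr]
        simp only [zero_mul, lintegral_zero]
        refine (lintegral_congr fun s => ?_).trans lintegral_zero
        rcases lt_or_ge s 0 with hs | hs
        · rw [gammaPDF_of_neg hs, zero_mul, zero_mul]
        · rw [gammaPDF_of_neg (x := r - s) (by linarith), mul_zero, zero_mul]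
      · rw [lintegral_eq_mul_lintegral_comp_mul_left hr (by fun_prop),
          ← lintegral_const_mul _ (by fun_prop)]
        refine lintegral_congr_ae ?_
        filter_upwards [Measure.ae_ne volume (0 : ℝ), Measure.ae_ne volume (1 : ℝ)] with b hb₀ hb₁
        rw [← mul_assoc, gammaPDF_mul_gammaPDF_eq hu₁ hu₂ hr hb₀ hb₁, mul_one_sub]

lemma gammaMeasure_conv_gammaMeasure {u₁ u₂ : ℝ} (hu₁ : 0 < u₁) (hu₂ : 0 < u₂) :
    (gammaMeasure u₁ 1).conv (gammaMeasure u₂ 1) = gammaMeasure (u₁ + u₂) 1 := by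
  have := isProbabilityMeasure_gammaMeasure (add_pos hu₁ hu₂) one_pos
  have := isProbabilityMeasureBeta hu₁ hu₂
  rw [Measure.conv, gammaMeasure_prod_gammaMeasure hu₁ hu₂, Measure.map_map (by fun_prop)
    (by fun_prop)]
  have : ((fun x : ℝ × ℝ => x.1 + x.2) ∘ fun p : ℝ × ℝ => (p.1 * p.2, p.1 * (1 - p.2))) =
      Prod.fst := by
    ext p
    simp only [Function.comp]
    ring
  rw [this, Measure.map_fst_prod, measure_univ, one_smul]

/-- The distribution function of `a₁ * G₁ + a₂ * G₂`, where `G₁` and `G₂` are independent variables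
with distributions `Gamma(u₁, 1)` and `Gamma(u₂, 1)`. -/
noncomputable def gammaCombinationCDF (u₁ u₂ a₁ a₂ x : ℝ) : ℝ :=
  ((gammaMeasure u₁ 1).prod (gammaMeasure u₂ 1)).real {p | a₁ * p.1 + a₂ * p.2 ≤ x}

lemma gammaCombinationCDF_eq_integral {u₁ u₂ : ℝ} (hu₁ : 0 < u₁) (hu₂ : 0 < u₂) (a₁ a₂ x : ℝ) :
    gammaCombinationCDF u₁ u₂ a₁ a₂ x =
      ∫ b, scaledGammaCDF (u₁ + u₂) x (a₁ * b + a₂ * (1 - b)) ∂(betaMeasure u₁ u₂) := by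
  have := isProbabilityMeasure_gammaMeasure (add_pos hu₁ hu₂) one_pos
  have := isProbabilityMeasureBeta hu₁ hu₂
  have hs : MeasurableSet {p : ℝ × ℝ | a₁ * p.1 + a₂ * p.2 ≤ x} :=
    measurableSet_le (by fun_prop) (by fun_prop)
  have hm : Measurable fun p : ℝ × ℝ => (p.1 * p.2, p.1 * (1 - p.2)) := by fun_prop
  rw [gammaCombinationCDF, gammaMeasure_prod_gammaMeasure hu₁ hu₂, measureReal_def,
    Measure.map_apply hm hs,
    Measure.prod_apply_symm (hm hs)]
  have hms := measurable_measure_prodMk_right (μ := gammaMeasure (u₁ + u₂) 1) (hm hs)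
  rw [← integral_toReal hms.aemeasurable (ae_of_all _ fun _ => measure_lt_top _ _)]
  refine integral_congr_ae (ae_of_all _ fun b => ?_)
  simp only [scaledGammaCDF, measureReal_def]
  congr 2
  ext r
  simp only [mem_preimage, mem_ofPred_eq]
  rw [show a₁ * (r * b) + a₂ * (r * (1 - b)) = r * (a₁ * b + a₂ * (1 - b)) by ring]

section differentiation

variable {Ω : Type*} {mΩ : MeasurableSpace Ω} {ν : Measure Ω} [IsFiniteMeasure ν] {c : Ω → ℝ}

@[fun_prop]
lemma continuous_scaledGammaCDF {u y : ℝ} (hu : 0 < u) (hy : 0 < y) :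
    Continuous (scaledGammaCDF u y) :=
  continuous_iff_continuousAt.2 fun _ => (hasDerivAt_scaledGammaCDF_right hu hy).continuousAt

lemma norm_scaledGammaCDF_le_one {u y c : ℝ} (hu : 0 < u) : ‖scaledGammaCDF u y c‖ ≤ 1 := by
  have := isProbabilityMeasure_gammaMeasure hu one_pos
  rw [scaledGammaCDF, norm_of_nonneg measureReal_nonneg]
  exact measureReal_le_one

lemma integrable_scaledGammaCDF {u y : ℝ} (hu : 0 < u) (hy : 0 < y) (hc : Measurable c) :
    Integrable (fun ω => scaledGammaCDF u y (c ω)) ν :=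
  .of_bound ((continuous_scaledGammaCDF hu hy).measurable.comp hc).aestronglyMeasurable 1
    (ae_of_all _ fun _ => norm_scaledGammaCDF_le_one hu)

lemma hasDerivAt_integral_inverseGammaKernel {q y : ℝ} (hq : 0 < q) (hy : 0 < y)
    (hc : Measurable c) :
    HasDerivAt (fun y => ∫ ω, inverseGammaKernel q y (c ω) ∂ν)
      (-∫ ω, inverseGammaKernel (q + 1) y (c ω) ∂ν) y := by
  rw [← integral_neg]
  refine (hasDerivAt_integral_of_dominated_loc_of_deriv_le
    (F := fun y ω => inverseGammaKernel q y (c ω))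
    (F' := fun y ω => -inverseGammaKernel (q + 1) y (c ω)) (s := Ioi (y / 2))
    (bound := fun _ => ((q + 1) / (y / 2)) ^ (q + 1)) (Ioi_mem_nhds (by linarith))
    (Eventually.of_forall fun z =>
      (inverseGammaKernel.measurable.comp hc).aestronglyMeasurable) ?_ (by fun_prop)
    (ae_of_all _ fun ω z hz => ?_) (integrable_const _)
    (ae_of_all _ fun ω z _ => inverseGammaKernel.hasDerivAt_left)).2
  · refine .of_bound (by fun_prop) ((q / y) ^ q) (ae_of_all _ fun ω => ?_)
    rw [norm_of_nonneg inverseGammaKernel.nonneg]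
    exact inverseGammaKernel.le_rpow hq hy
  · rw [norm_neg, norm_of_nonneg inverseGammaKernel.nonneg]
    exact inverseGammaKernel.le_of_le (by linarith) (by linarith) (le_of_lt hz)

lemma hasDerivAt_integral_scaledGammaCDF {u y : ℝ} (hu : 1 ≤ u) (hy : 0 < y)
    (hc : Measurable c) :
    HasDerivAt (fun y => ∫ ω, scaledGammaCDF u y (c ω) ∂ν)
      (y ^ (u - 1) / Gamma u * ∫ ω, inverseGammaKernel u y (c ω) ∂ν) y := by
  have hu0 : 0 < u := by linarith
  have hΓ := Gamma_pos_of_pos hu0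
  rw [← integral_const_mul]
  have hpos : ∀ z ∈ Ioo (y / 2) (2 * y), 0 < z := fun z hz => by linarith [hz.1]
  convert! (hasDerivAt_integral_of_dominated_loc_of_deriv_le (μ := ν)
    (F := fun y ω => scaledGammaCDF u y (c ω))
    (F' := fun y ω => y ^ (u - 1) * inverseGammaKernel u y (c ω) / Gamma u)
    (s := Ioo (y / 2) (2 * y)) (x₀ := y)
    (bound := fun _ => (2 * y) ^ (u - 1) * (u / (y / 2)) ^ u / Gamma u)
    (Ioo_mem_nhds (by linarith) (by linarith))
    ?_ (integrable_scaledGammaCDF hu0 hy hc) (by fun_prop)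
    (ae_of_all _ fun ω z hz => ?_) (integrable_const _)
    (ae_of_all _ fun ω z hz => hasDerivAt_scaledGammaCDF_left hu0 (hpos z hz))).2 using 1
  · congr 1
    ext ω
    ring
  · filter_upwards [Ioi_mem_nhds hy] with z hz
    exact (integrable_scaledGammaCDF hu0 hz hc).aestronglyMeasurable
  · have hz0 := hpos z hz
    have := inverseGammaKernel.nonneg (q := u) (y := z) (c := c ω)
    rw [norm_of_nonneg (by positivity)]
    have hu1 := sub_nonneg.2 hu
    gcongr
    · exact hz.2.le
    · exact inverseGammaKernel.le_of_le hu0 (by linarith) hz.1.le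

end differentiation

lemma ae_betaMeasure_mem_Ioo {α β : ℝ} : ∀ᵐ b ∂(betaMeasure α β), b ∈ Ioo (0 : ℝ) 1 := by
  rw [betaMeasure, ae_withDensity_iff (measurable_betaPDF α β)]
  refine ae_of_all _ fun b hb => ?_
  by_contra h
  rw [mem_Ioo, not_and_or, not_lt, not_lt] at h
  exact hb (h.elim betaPDF_eq_zero_of_nonpos betaPDF_eq_zero_of_one_le)

lemma integrable_betaMeasure_of_continuous {α β : ℝ} (hα : 0 < α) (hβ : 0 < β) {g : ℝ → ℝ}
    (hg : Continuous g) : Integrable g (betaMeasure α β) := by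
  have := isProbabilityMeasureBeta hα hβ
  obtain ⟨C, hC⟩ := isCompact_Icc.exists_bound_of_continuousOn (s := Icc (0 : ℝ) 1)
    hg.continuousOn
  refine .of_bound hg.aestronglyMeasurable C ?_
  filter_upwards [ae_betaMeasure_mem_Ioo] with b hb using hC b (Ioo_subset_Icc_self hb)

lemma toReal_betaPDF_smul {α β : ℝ} (hα : 0 < α) (hβ : 0 < β) (g : ℝ → ℝ) :
    (fun b => (betaPDF α β b).toReal • g b) =
      (Ioo 0 1).indicator fun b => 1 / beta α β * (b ^ (α - 1) * (1 - b) ^ (β - 1) * g b) := by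
  ext b
  by_cases hb : b ∈ Ioo (0 : ℝ) 1
  · have := beta_pos hα hβ
    have h0 : 0 < b := hb.1
    have h1 : 0 < 1 - b := by linarith [hb.2]
    rw [indicator_of_mem hb, betaPDF_of_pos_lt_one hb.1 hb.2,
      ENNReal.toReal_ofReal (by positivity), smul_eq_mul]
    ring
  · rw [indicator_of_notMem hb]
    rw [mem_Ioo, not_and_or, not_lt, not_lt] at hb
    rw [hb.elim betaPDF_eq_zero_of_nonpos betaPDF_eq_zero_of_one_le, ENNReal.toReal_zero, zero_smul]

lemma beta_mul_integral_betaMeasure {α β : ℝ} (hα : 0 < α) (hβ : 0 < β) (g : ℝ → ℝ) :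
    beta α β * ∫ b, g b ∂(betaMeasure α β) =
      ∫ b in (0 : ℝ)..1, b ^ (α - 1) * (1 - b) ^ (β - 1) * g b := by
  have hB := beta_pos hα hβ
  rw [betaMeasure, integral_withDensity_eq_integral_toReal_smul (measurable_betaPDF α β)
    (ae_of_all _ fun _ => ENNReal.ofReal_lt_top), toReal_betaPDF_smul hα hβ,
    integral_indicator measurableSet_Ioo, integral_const_mul,
    intervalIntegral.integral_of_le zero_le_one, integral_Ioc_eq_integral_Ioo, ← mul_assoc,
    mul_one_div_cancel hB.ne', one_mul]

lemma intervalIntegrable_of_integrable_betaMeasure {α β : ℝ} (hα : 0 < α) (hβ : 0 < β) {g : ℝ → ℝ}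
    (hg : Integrable g (betaMeasure α β)) :
    IntervalIntegrable (fun b => b ^ (α - 1) * (1 - b) ^ (β - 1) * g b) volume 0 1 := by
  have hB := beta_pos hα hβ
  rw [betaMeasure, integrable_withDensity_iff_integrable_smul' (measurable_betaPDF α β)
    (ae_of_all _ fun _ => ENNReal.ofReal_lt_top), toReal_betaPDF_smul hα hβ,
    integrable_indicator_iff measurableSet_Ioo] at hg
  rw [intervalIntegrable_iff_integrableOn_Ioo_of_le zero_le_one]
  exact (integrable_const_mul_iff (one_div_pos.2 hB).ne'.isUnit _).1 hg

/-- Integration by parts against the beta distribution. -/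
lemma integral_betaMeasure_by_parts {u₁ u₂ : ℝ} (hu₁ : 0 < u₁) (hu₂ : 0 < u₂) {f f' : ℝ → ℝ}
    (hf : ∀ b, HasDerivAt f (f' b) b) (hf' : Continuous f') :
    u₁ * u₂ * (beta u₁ u₂ * ∫ b, (b / u₁ - (1 - b) / u₂) * f b ∂(betaMeasure u₁ u₂)) =
      beta (u₁ + 1) (u₂ + 1) * ∫ b, f' b ∂(betaMeasure (u₁ + 1) (u₂ + 1)) := by
  have hfc : Continuous f := continuous_iff_continuousAt.2 fun b => (hf b).continuousAt
  have hi₁ := intervalIntegrable_of_integrable_betaMeasure hu₁ hu₂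
    (integrable_betaMeasure_of_continuous hu₁ hu₂
      (g := fun b => (b / u₁ - (1 - b) / u₂) * f b) (by fun_prop))
  have hi₂ := intervalIntegrable_of_integrable_betaMeasure (add_pos hu₁ one_pos)
    (add_pos hu₂ one_pos) (integrable_betaMeasure_of_continuous (add_pos hu₁ one_pos)
      (add_pos hu₂ one_pos) hf')
  rw [beta_mul_integral_betaMeasure hu₁ hu₂,
    beta_mul_integral_betaMeasure (add_pos hu₁ one_pos) (add_pos hu₂ one_pos)]
  have hFTC := intervalIntegral.integral_eq_sub_of_hasDerivAt_of_le zero_le_one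
    (f := fun b => b ^ u₁ * (1 - b) ^ u₂ * f b)
    (f' := fun b => b ^ (u₁ + 1 - 1) * (1 - b) ^ (u₂ + 1 - 1) * f' b -
      u₁ * u₂ * (b ^ (u₁ - 1) * (1 - b) ^ (u₂ - 1) * ((b / u₁ - (1 - b) / u₂) * f b)))
    ?_ ?_ (hi₂.sub (hi₁.const_mul _))
  · rw [intervalIntegral.integral_sub hi₂ (hi₁.const_mul _),
      intervalIntegral.integral_const_mul] at hFTC
    simp only [zero_rpow hu₁.ne', sub_self, zero_rpow hu₂.ne', mul_zero, zero_mul] at hFTC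
    linarith
  · have h₁ : Continuous fun b : ℝ => b ^ u₁ := continuous_id.rpow_const fun _ => Or.inr hu₁.le
    have h₂ : Continuous fun b : ℝ => (1 - b) ^ u₂ :=
      (continuous_const.sub continuous_id).rpow_const fun _ => Or.inr hu₂.le
    exact ((h₁.mul h₂).mul hfc).continuousOn
  · intro b hb
    have h0 : b ≠ 0 := hb.1.ne'
    have h1 : 1 - b ≠ 0 := by linarith [hb.2]
    convert! ((hasDerivAt_rpow_const (p := u₁) (Or.inl h0)).mul
      (((hasDerivAt_id b).const_sub 1).rpow_const (p := u₂) (Or.inl h1))).mul (hf b) using 1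
    simp only [add_sub_cancel_right, id, rpow_sub_one h0, rpow_sub_one h1, Pi.mul_apply]
    field_simp
    ring

variable {u₁ u₂ a₁ a₂ x : ℝ}

lemma hasDerivAt_gammaCombinationCDF_perturb (hu₁ : 0 < u₁) (hu₂ : 0 < u₂) (a₁ a₂ δ : ℝ)
    (hx : 0 < x) :
    HasDerivAt (fun d => gammaCombinationCDF u₁ u₂ (a₁ + d / u₁) (a₂ - d / u₂) x)
      (-(x ^ (u₁ + u₂) / Gamma (u₁ + u₂) * ∫ b, (b / u₁ - (1 - b) / u₂) *
        inverseGammaKernel (u₁ + u₂ + 1) x ((a₁ + δ / u₁) * b + (a₂ - δ / u₂) * (1 - b))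
        ∂(betaMeasure u₁ u₂))) δ := by
  have := isProbabilityMeasureBeta hu₁ hu₂
  have hU := add_pos hu₁ hu₂
  have hΓ := Gamma_pos_of_pos hU
  have hE := inverseGammaKernel.continuous (q := u₁ + u₂ + 1) hx
  simp only [gammaCombinationCDF_eq_integral hu₁ hu₂]
  rw [← integral_const_mul, ← integral_neg]
  have hM : 0 < u₁ + u₂ + 1 := by linarith
  convert! (hasDerivAt_integral_of_dominated_loc_of_deriv_le (μ := betaMeasure u₁ u₂)
    (F := fun d b => scaledGammaCDF (u₁ + u₂) x ((a₁ + d / u₁) * b + (a₂ - d / u₂) * (1 - b)))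
    (F' := fun d b => -(x ^ (u₁ + u₂) * inverseGammaKernel (u₁ + u₂ + 1) x
      ((a₁ + d / u₁) * b + (a₂ - d / u₂) * (1 - b)) / Gamma (u₁ + u₂)) *
        (b / u₁ - (1 - b) / u₂))
    (s := univ) (x₀ := δ)
    (bound := fun _ => x ^ (u₁ + u₂) * ((u₁ + u₂ + 1) / x) ^ (u₁ + u₂ + 1) / Gamma (u₁ + u₂) *
      (1 / u₁ + 1 / u₂)) univ_mem
    (Eventually.of_forall fun d =>
      (integrable_scaledGammaCDF hU hx (by fun_prop)).aestronglyMeasurable)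
    (integrable_scaledGammaCDF hU hx (by fun_prop)) (by fun_prop)
    ?_ (integrable_const _)
    (ae_of_all _ fun b d _ => ?_)).2 using 1
  · congr 1
    ext b
    ring
  · filter_upwards [ae_betaMeasure_mem_Ioo] with b hb d _
    rw [norm_mul, norm_neg, norm_of_nonneg
      (by have := inverseGammaKernel.nonneg (q := u₁ + u₂ + 1) (y := x)
            (c := (a₁ + d / u₁) * b + (a₂ - d / u₂) * (1 - b))
          positivity)]
    gcongr
    · exact inverseGammaKernel.le_rpow hM hx
    · refine (norm_sub_le _ _).trans ?_
      rw [norm_of_nonneg (div_nonneg hb.1.le hu₁.le),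
        norm_of_nonneg (div_nonneg (sub_nonneg.2 hb.2.le) hu₂.le)]
      gcongr
      · exact hb.2.le
      · linarith [hb.1]
  · have h : HasDerivAt (fun d => (a₁ + d / u₁) * b + (a₂ - d / u₂) * (1 - b))
        (b / u₁ - (1 - b) / u₂) d := by
      convert! ((((hasDerivAt_id d).div_const u₁).const_add a₁).mul_const b).add
        ((((hasDerivAt_id d).div_const u₂).const_sub a₂).mul_const (1 - b)) using 1
      ring
    exact (hasDerivAt_scaledGammaCDF_right hU hx).comp d h

lemma hasDerivAt_gammaCombinationCDF (hu₁ : 0 < u₁) (hu₂ : 0 < u₂) (hu : 1 ≤ u₁ + u₂)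
    (a₁ a₂ : ℝ) (hx : 0 < x) :
    HasDerivAt (gammaCombinationCDF u₁ u₂ a₁ a₂)
      (x ^ (u₁ + u₂ - 1) / Gamma (u₁ + u₂) *
        ∫ b, inverseGammaKernel (u₁ + u₂) x (a₁ * b + a₂ * (1 - b)) ∂(betaMeasure u₁ u₂)) x := by
  have := isProbabilityMeasureBeta hu₁ hu₂
  rw [show gammaCombinationCDF u₁ u₂ a₁ a₂ = _ from
    funext (gammaCombinationCDF_eq_integral hu₁ hu₂ a₁ a₂)]
  exact hasDerivAt_integral_scaledGammaCDF hu hx (by fun_prop)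

lemma hasDerivAt_deriv_gammaCombinationCDF (hu₁ : 0 < u₁) (hu₂ : 0 < u₂) (hu : 1 ≤ u₁ + u₂)
    (a₁ a₂ : ℝ) (hx : 0 < x) :
    HasDerivAt (deriv (gammaCombinationCDF u₁ u₂ a₁ a₂))
      ((u₁ + u₂ - 1) * x ^ (u₁ + u₂ - 1 - 1) / Gamma (u₁ + u₂) *
        ∫ b, inverseGammaKernel (u₁ + u₂) x (a₁ * b + a₂ * (1 - b)) ∂(betaMeasure u₁ u₂) -
      x ^ (u₁ + u₂ - 1) / Gamma (u₁ + u₂) *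
        ∫ b, inverseGammaKernel (u₁ + u₂ + 1) x (a₁ * b + a₂ * (1 - b)) ∂(betaMeasure u₁ u₂))
      x := by
  have := isProbabilityMeasureBeta hu₁ hu₂
  have h := ((hasDerivAt_rpow_const (p := u₁ + u₂ - 1) (Or.inl hx.ne')).div_const
    (Gamma (u₁ + u₂))).mul (hasDerivAt_integral_inverseGammaKernel (ν := betaMeasure u₁ u₂)
      (c := fun b => a₁ * b + a₂ * (1 - b)) (add_pos hu₁ hu₂) hx (by fun_prop))
  rw [mul_neg, ← sub_eq_add_neg] at h
  refine h.congr_of_eventuallyEq ?_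
  filter_upwards [Ioi_mem_nhds hx] with y hy
  exact (hasDerivAt_gammaCombinationCDF hu₁ hu₂ hu a₁ a₂ hy).deriv

lemma integral_inverseGammaKernel_by_parts (hu₁ : 0 < u₁) (hu₂ : 0 < u₂) (q a₁ a₂ : ℝ)
    (hx : 0 < x) :
    u₁ * u₂ * (beta u₁ u₂ * ∫ b, (b / u₁ - (1 - b) / u₂) *
        inverseGammaKernel q x (a₁ * b + a₂ * (1 - b)) ∂(betaMeasure u₁ u₂)) =
      beta (u₁ + 1) (u₂ + 1) * ((a₁ - a₂) *
        (-q * ∫ b, inverseGammaKernel (q + 1) x (a₁ * b + a₂ * (1 - b))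
            ∂(betaMeasure (u₁ + 1) (u₂ + 1)) +
          x * ∫ b, inverseGammaKernel (q + 2) x (a₁ * b + a₂ * (1 - b))
            ∂(betaMeasure (u₁ + 1) (u₂ + 1)))) := by
  have hE (p : ℝ) : Continuous fun b => inverseGammaKernel p x (a₁ * b + a₂ * (1 - b)) :=
    (inverseGammaKernel.continuous hx).comp (by fun_prop)
  have hi (p : ℝ) := integrable_betaMeasure_of_continuous (add_pos hu₁ one_pos)
    (add_pos hu₂ one_pos) (hE p)
  rw [integral_betaMeasure_by_parts hu₁ hu₂
    (f := fun b => inverseGammaKernel q x (a₁ * b + a₂ * (1 - b)))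
    (f' := fun b => (a₁ - a₂) * (-q * inverseGammaKernel (q + 1) x (a₁ * b + a₂ * (1 - b)) +
      x * inverseGammaKernel (q + 2) x (a₁ * b + a₂ * (1 - b)))) ?_ ?_,
    integral_const_mul, integral_add ((hi _).const_mul _) ((hi _).const_mul _),
    integral_const_mul, integral_const_mul]
  · intro b
    have h : HasDerivAt (fun b => a₁ * b + a₂ * (1 - b)) (a₁ - a₂) b := by
      convert! ((hasDerivAt_id b).const_mul a₁).add
        (((hasDerivAt_id b).const_sub 1).const_mul a₂) using 1
      ring
    convert! (inverseGammaKernel.hasDerivAt_right hx).comp b h using 1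
    ring
  · have h₁ := hE (q + 1)
    have h₂ := hE (q + 2)
    fun_prop

lemma deriv_gammaCombinationCDF_perturb_of_pos (hu₁ : 0 < u₁) (hu₂ : 0 < u₂) (a₁ a₂ δ : ℝ)
    (hx : 0 < x) :
    deriv (fun d => gammaCombinationCDF u₁ u₂ (a₁ + d / u₁) (a₂ - d / u₂) x) δ =
      ((a₁ + δ / u₁) - (a₂ - δ / u₂)) * deriv (deriv
        (gammaCombinationCDF (u₁ + 1) (u₂ + 1) (a₁ + δ / u₁) (a₂ - δ / u₂))) x := by
  rw [(hasDerivAt_gammaCombinationCDF_perturb hu₁ hu₂ a₁ a₂ δ hx).deriv,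
    (hasDerivAt_deriv_gammaCombinationCDF (add_pos hu₁ one_pos) (add_pos hu₂ one_pos)
      (by linarith) (a₁ + δ / u₁) (a₂ - δ / u₂) hx).deriv]
  have key := integral_inverseGammaKernel_by_parts hu₁ hu₂ (u₁ + u₂ + 1) (a₁ + δ / u₁)
    (a₂ - δ / u₂) hx
  have hU := add_pos hu₁ hu₂
  have h₁ := Gamma_pos_of_pos hu₁
  have h₂ := Gamma_pos_of_pos hu₂
  have h₃ := Gamma_pos_of_pos hU
  rw [show u₁ + 1 + (u₂ + 1) + 1 = u₁ + u₂ + 1 + 2 by ring,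
    show u₁ + 1 + (u₂ + 1) = u₁ + u₂ + 1 + 1 by ring]
  have hΓ : Gamma (u₁ + u₂ + 1 + 1) = (u₁ + u₂ + 1) * ((u₁ + u₂) * Gamma (u₁ + u₂)) := by
    rw [Gamma_add_one (by positivity), Gamma_add_one hU.ne']
  have hβ : beta (u₁ + 1) (u₂ + 1) =
      u₁ * u₂ * (beta u₁ u₂ * (Gamma (u₁ + u₂) / Gamma (u₁ + u₂ + 1 + 1))) := by
    rw [beta, beta, show u₁ + 1 + (u₂ + 1) = u₁ + u₂ + 1 + 1 by ring, hΓ,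
      Gamma_add_one hu₁.ne', Gamma_add_one hu₂.ne']
    field_simp
  have hB := beta_pos hu₁ hu₂
  rw [hβ, mul_assoc (u₁ * u₂), mul_assoc (beta u₁ u₂)] at key
  rw [mul_left_cancel₀ hB.ne' (mul_left_cancel₀ (mul_pos hu₁ hu₂).ne' key), hΓ,
    show u₁ + u₂ + 1 + 1 - 1 - 1 = u₁ + u₂ by ring, show u₁ + u₂ + 1 + 1 - 1 = u₁ + u₂ + 1 by ring,
    rpow_add_one hx.ne']
  field_simp
  ring

lemma gammaCombinationCDF_nonneg : 0 ≤ gammaCombinationCDF u₁ u₂ a₁ a₂ x := measureReal_nonneg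

lemma isProbabilityMeasure_gammaMeasure_prod (hu₁ : 0 < u₁) (hu₂ : 0 < u₂) :
    IsProbabilityMeasure ((gammaMeasure u₁ 1).prod (gammaMeasure u₂ 1)) := by
  have := isProbabilityMeasure_gammaMeasure hu₁ one_pos
  have := isProbabilityMeasure_gammaMeasure hu₂ one_pos
  infer_instance

lemma monotone_gammaCombinationCDF (hu₁ : 0 < u₁) (hu₂ : 0 < u₂) :
    Monotone (gammaCombinationCDF u₁ u₂ a₁ a₂) := by
  have := isProbabilityMeasure_gammaMeasure_prod hu₁ hu₂
  exact fun x y hxy => measureReal_mono fun p hp => le_trans hp hxy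

lemma gammaCombinationCDF_eq_zero (hu₁ : 0 < u₁) (hu₂ : 0 < u₂) (ha₁ : 0 ≤ a₁) (ha₂ : 0 ≤ a₂)
    (h : x < 0 ∨ (x ≤ 0 ∧ 0 < a₁ + a₂)) : gammaCombinationCDF u₁ u₂ a₁ a₂ x = 0 := by
  have := isProbabilityMeasure_gammaMeasure hu₁ one_pos
  have := isProbabilityMeasure_gammaMeasure hu₂ one_pos
  refine (measureReal_congr ?_).trans measureReal_empty
  filter_upwards [Measure.quasiMeasurePreserving_fst.ae ae_gammaMeasure_pos,
    Measure.quasiMeasurePreserving_snd.ae ae_gammaMeasure_pos] with p hp₁ hp₂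
  refine propext ⟨fun hp => ?_, False.elim⟩
  have hp' : a₁ * p.1 + a₂ * p.2 ≤ x := hp
  have h₁ : 0 ≤ a₁ * p.1 := mul_nonneg ha₁ hp₁.le
  have h₂ : 0 ≤ a₂ * p.2 := mul_nonneg ha₂ hp₂.le
  rcases h with hx | ⟨hx, ha⟩
  · linarith
  · have e₁ : a₁ = 0 := by nlinarith
    have e₂ : a₂ = 0 := by nlinarith
    linarith

lemma deriv_gammaCombinationCDF_perturb (hu₁ : 0 < u₁) (hu₂ : 0 < u₂) (a₁ a₂ δ x : ℝ)
    (ha₁ : 0 ≤ a₁ + δ / u₁) (ha₂ : 0 ≤ a₂ - δ / u₂) :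
    deriv (fun d => gammaCombinationCDF u₁ u₂ (a₁ + d / u₁) (a₂ - d / u₂) x) δ =
      ((a₁ + δ / u₁) - (a₂ - δ / u₂)) * deriv (deriv
        (gammaCombinationCDF (u₁ + 1) (u₂ + 1) (a₁ + δ / u₁) (a₂ - δ / u₂))) x := by
  rcases lt_or_ge 0 x with hx | hx
  · exact deriv_gammaCombinationCDF_perturb_of_pos hu₁ hu₂ a₁ a₂ δ hx
  have hu₁' := add_pos hu₁ one_pos
  have hu₂' := add_pos hu₂ one_pos
  by_cases h : x < 0 ∨ (x ≤ 0 ∧ 0 < (a₁ + δ / u₁) + (a₂ - δ / u₂))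
  · have hmin (y : ℝ) (hy : y ≤ x) : deriv
        (gammaCombinationCDF (u₁ + 1) (u₂ + 1) (a₁ + δ / u₁) (a₂ - δ / u₂)) y = 0 := by
      refine IsLocalMin.deriv_eq_zero (Eventually.of_forall fun z => ?_)
      rw [gammaCombinationCDF_eq_zero hu₁' hu₂' ha₁ ha₂
        (h.imp hy.trans_lt (And.imp_left hy.trans))]
      exact gammaCombinationCDF_nonneg
    have hmin' : IsLocalMin (deriv
        (gammaCombinationCDF (u₁ + 1) (u₂ + 1) (a₁ + δ / u₁) (a₂ - δ / u₂))) x := by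
      refine Eventually.of_forall fun z => ?_
      rw [hmin x le_rfl]
      exact (monotone_gammaCombinationCDF hu₁' hu₂').deriv_nonneg
    rw [hmin'.deriv_eq_zero, mul_zero]
    refine IsLocalMin.deriv_eq_zero (Eventually.of_forall fun d => ?_)
    beta_reduce
    rw [gammaCombinationCDF_eq_zero hu₁ hu₂ ha₁ ha₂ h]
    exact gammaCombinationCDF_nonneg
  · push Not at h
    have hx0 : x = 0 := le_antisymm hx h.1
    have h₁ : a₁ + δ / u₁ = 0 := by linarith [h.2 hx]
    have h₂ : a₂ - δ / u₂ = 0 := by linarith [h.2 hx]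
    have := isProbabilityMeasure_gammaMeasure_prod hu₁ hu₂
    rw [h₁, h₂, sub_zero, zero_mul]
    refine IsLocalMax.deriv_eq_zero (Eventually.of_forall fun d => ?_)
    simp only [h₁, h₂, hx0, gammaCombinationCDF, zero_mul, add_zero, le_refl, ofPred_true,
      probReal_univ]
    exact measureReal_le_one

section Pi

variable {μ : Measure (Fin 4 → ℝ)}

lemma expMeasure_eq_gammaMeasure (r : ℝ) : expMeasure r = gammaMeasure 1 r := rfl

lemma iIndepFun_eval_pi_gammaMeasure (hu₁ : 0 < u₁) (hu₂ : 0 < u₂)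
    (hμ : μ = Measure.pi
      ![gammaMeasure u₁ 1, gammaMeasure u₂ 1, expMeasure 1, expMeasure 1]) :
    iIndepFun (fun i (v : Fin 4 → ℝ) => v i) μ ∧ ∀ i, μ.map (fun v => v i) =
      ![gammaMeasure u₁ 1, gammaMeasure u₂ 1, expMeasure 1, expMeasure 1] i := by
  subst hμ
  have (i : Fin 4) : IsProbabilityMeasure
      (![gammaMeasure u₁ 1, gammaMeasure u₂ 1, expMeasure 1, expMeasure 1] i) := by
    have := isProbabilityMeasure_gammaMeasure hu₁ one_pos
    have := isProbabilityMeasure_gammaMeasure hu₂ one_pos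
    have := isProbabilityMeasure_expMeasure one_pos
    fin_cases i <;> assumption
  exact ⟨iIndepFun_pi (X := fun _ x => x) fun i => aemeasurable_id,
    fun i => (measurePreserving_eval _ i).map_eq⟩

lemma ProbabilityTheory.IndepFun.real_le_eq_gammaCombinationCDF {Ω : Type*}
    {mΩ : MeasurableSpace Ω} {P : Measure Ω} [IsFiniteMeasure P] {X Y : Ω → ℝ}
    (hX : Measurable X) (hY : Measurable Y) (hXY : IndepFun X Y P)
    (hX' : P.map X = gammaMeasure u₁ 1) (hY' : P.map Y = gammaMeasure u₂ 1) (a₁ a₂ x : ℝ) :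
    (P {ω | a₁ * X ω + a₂ * Y ω ≤ x}).toReal = gammaCombinationCDF u₁ u₂ a₁ a₂ x := by
  have h := (indepFun_iff_map_prod_eq_prod_map_map hX.aemeasurable hY.aemeasurable).1 hXY
  rw [gammaCombinationCDF, ← hX', ← hY', ← h, measureReal_def, Measure.map_apply (hX.prodMk hY)
    (measurableSet_le (by fun_prop) (by fun_prop))]
  rfl

end Pi

end GammaCombination

/-- Fix u₁, u₂ > 0 and a₁*, a₂* ≥ 0, and for a real parameter δ set
a₁ = a₁* + δ/u₁, a₂ = a₂* - δ/u₂.  With G₁ ~ Gamma(u₁,1), G₂ ~ Gamma(u₂,1),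
Z₁, Z₂ ~ Exp(1) all independent (realized as coordinates of a product measure μ),
F(δ,x) = P(a₁G₁ + a₂G₂ ≤ x) and H(δ,x) = P(a₁(G₁+Z₁) + a₂(G₂+Z₂) ≤ x) satisfy
∂/∂δ F(δ,x) = (a₁ - a₂) ∂²/∂x² H(δ,x). -/
theorem perturbation_derivative_identity
    (u₁ u₂ : ℝ) (hu₁ : 0 < u₁) (hu₂ : 0 < u₂)
    (a₁s a₂s : ℝ) (ha₁s : 0 ≤ a₁s) (ha₂s : 0 ≤ a₂s)
    (μ : Measure (Fin 4 → ℝ))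
    (hμ : μ = Measure.pi
      ![gammaMeasure u₁ 1, gammaMeasure u₂ 1, expMeasure 1, expMeasure 1])
    (F H : ℝ → ℝ → ℝ)
    (hF : ∀ δ x, F δ x
      = (μ {v | (a₁s + δ / u₁) * v 0 + (a₂s - δ / u₂) * v 1 ≤ x}).toReal)
    (hH : ∀ δ x, H δ x
      = (μ {v | (a₁s + δ / u₁) * (v 0 + v 2) + (a₂s - δ / u₂) * (v 1 + v 3) ≤ x}).toReal)
    (δ : ℝ) (ha₁ : 0 ≤ a₁s + δ / u₁) (ha₂ : 0 ≤ a₂s - δ / u₂) (x : ℝ) :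
    deriv (fun d => F d x) δ
      = ((a₁s + δ / u₁) - (a₂s - δ / u₂)) * deriv (fun y => deriv (H δ) y) x := by
  obtain ⟨hind, hlaw⟩ := iIndepFun_eval_pi_gammaMeasure hu₁ hu₂ hμ
  have := hind.isProbabilityMeasure
  have hsum (i j : Fin 4) (hij : i ≠ j) {u : ℝ} (hu : 0 < u)
      (hi : μ.map (fun v => v i) = gammaMeasure u 1) (hj : μ.map (fun v => v j) = expMeasure 1) :
      μ.map (fun v => v i + v j) = gammaMeasure (u + 1) 1 := by
    have h := (hind.indepFun hij).map_add_eq_map_conv_map (by fun_prop) (by fun_prop)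
    rwa [hi, hj, expMeasure_eq_gammaMeasure, gammaMeasure_conv_gammaMeasure hu one_pos] at h
  have hF' : F = fun δ x => gammaCombinationCDF u₁ u₂ (a₁s + δ / u₁) (a₂s - δ / u₂) x := by
    ext δ x
    rw [hF]
    exact (hind.indepFun (i := 0) (j := 1) (by decide)).real_le_eq_gammaCombinationCDF
      (by fun_prop) (by fun_prop) (hlaw 0) (hlaw 1) _ _ _
  have hH' : H = fun δ =>
      gammaCombinationCDF (u₁ + 1) (u₂ + 1) (a₁s + δ / u₁) (a₂s - δ / u₂) := by
    ext δ x
    rw [hH]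
    exact (hind.indepFun_add_add (fun i => measurable_pi_apply i) 0 2 1 3 (by decide) (by decide)
      (by decide) (by decide)).real_le_eq_gammaCombinationCDF (by fun_prop) (by fun_prop)
      (hsum 0 2 (by decide) hu₁ (hlaw 0) (hlaw 2)) (hsum 1 3 (by decide) hu₂ (hlaw 1) (hlaw 3))
      _ _ _
  rw [hF', hH']
  exact deriv_gammaCombinationCDF_perturb hu₁ hu₂ a₁s a₂s δ x ha₁ ha₂
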